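/- Let d ≥ 1, n ≥ d+1, let c be a real number with 0 < c, and let T be a d-hypertree on [n] over F_2 with average filling-volume μ(T) ≥ c·C(n-1,d). Then there exist τ ∈ T and σ ∈ Cut(τ,T) such that |Cut(τ,T)| · |Fill(σ,T)| ≥ (c³/8)·C(n,d+1)·C(n-1,d). -/

import Mathlib

open Finset symmDiff

/-- The vertex set `[n] = {1, …, n}`. -/
def rng (n : ℕ) : Finset ℕ := Finset.Icc 1 n

/-- The set of `d`-simplices (i.e. `(d+1)`-element subsets) on the vertex set `V`. -/
def simplices (V : Finset ℕ) (d : ℕ) : Finset (Finset ℕ) :=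
  V.powerset.filter fun σ => σ.card = d + 1

/-- The mod-2 boundary of a set `X` of simplices: the set of faces `τ` of codimension one
(`|τ| + 1 = |σ|`) contained in an odd number of members of `X`. -/
def bd (X : Finset (Finset ℕ)) : Finset (Finset ℕ) :=
  (X.biUnion fun σ => σ.powerset).filter
    fun τ => Odd (X.filter fun σ => τ ⊆ σ ∧ τ.card + 1 = σ.card).card

/-- A set of simplices is acyclic (a forest) over `F_2` if no nonempty subset has
empty boundary. -/
def IsAcyclic (F : Finset (Finset ℕ)) : Prop :=
  ∀ Y ⊆ F, Y ≠ ∅ → bd Y ≠ ∅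

/-- A `d`-hypertree on `V`: a maximal acyclic set of `d`-simplices on `V`. -/
def IsHypertreeOn (V : Finset ℕ) (d : ℕ) (T : Finset (Finset ℕ)) : Prop :=
  T ⊆ simplices V d ∧ IsAcyclic T ∧
    ∀ G, T ⊆ G → G ⊆ simplices V d → IsAcyclic G → G = T

/-- A simple cycle over `F_2`: a nonempty set with empty boundary, no nonempty proper
subset of which has empty boundary. -/
def IsSimpleCycle (Z : Finset (Finset ℕ)) : Prop :=
  Z ≠ ∅ ∧ bd Z = ∅ ∧ ∀ Y ⊂ Z, Y ≠ ∅ → bd Y ≠ ∅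

/-- Collapsibility: `X` can be reduced to `∅` by repeatedly removing a simplex `σ ∈ X`
containing a codimension-one face contained in no other current member of `X`. -/
inductive Collapsible : Finset (Finset ℕ) → Prop
  | empty : Collapsible ∅
  | step (X : Finset (Finset ℕ)) (σ τ : Finset ℕ) (hσ : σ ∈ X) (hτ : τ ⊆ σ)
      (hcard : τ.card + 1 = σ.card) (huniq : ∀ σ' ∈ X, τ ⊆ σ' → σ' = σ)
      (h : Collapsible (X.erase σ)) : Collapsible X

/-- The cone over `X` with apex `v`. -/
def cone (v : ℕ) (X : Finset (Finset ℕ)) : Finset (Finset ℕ) :=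
  X.image (insert v)

/-- The link of the vertex `v` in `X`. -/
def link (v : ℕ) (X : Finset (Finset ℕ)) : Finset (Finset ℕ) :=
  (X.filter fun σ => v ∈ σ).image fun σ => σ.erase v

/-- `fill Z T`: the subset `F ⊆ T` with `∂F = Z` (when it exists; it is unique when `T`
is a hypertree and `Z` a cycle). -/
noncomputable def fill (Z T : Finset (Finset ℕ)) : Finset (Finset ℕ) :=
  if h : ∃ F, F ⊆ T ∧ bd F = Z then h.choose else ∅

/-- The average filling-volume `μ(T)` of a `d`-hypertree `T` on `[n]`. -/
noncomputable def fillVolAvg (n d : ℕ) (T : Finset (Finset ℕ)) : ℝ :=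
  (∑ σ ∈ simplices (rng n) d, ((fill (bd {σ}) T).card : ℝ)) / (n.choose (d + 1) : ℝ)

open Classical in
/-- The cut of `τ` in `T`: the set of `d`-simplices `σ` on `[n]` such that
`T ⊕ {τ} ⊕ {σ}` is a `d`-hypertree on `[n]`. -/
noncomputable def cut (n d : ℕ) (τ : Finset ℕ) (T : Finset (Finset ℕ)) : Finset (Finset ℕ) :=
  (simplices (rng n) d).filter fun σ => IsHypertreeOn (rng n) d ((T ∆ {τ}) ∆ {σ})


lemma mem_bd' (X : Finset (Finset ℕ)) (τ : Finset ℕ) :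
    τ ∈ bd X ↔ Odd (X.filter fun σ => τ ⊆ σ ∧ τ.card + 1 = σ.card).card := by
  unfold bd
  rw [mem_filter]
  refine ⟨fun h => h.2, fun h => ⟨?_, h⟩⟩
  obtain ⟨σ, hσ⟩ := card_pos.1 h.pos
  rw [mem_filter] at hσ
  exact mem_biUnion.2 ⟨σ, hσ.1, mem_powerset.2 hσ.2.1⟩

lemma odd_card_symmDiff {α : Type*} [DecidableEq α] (A B : Finset α) :
    Odd (A ∆ B).card ↔ ¬ (Odd A.card ↔ Odd B.card) := by
  have h1 : (A ∆ B).card = (A \ B).card + (B \ A).card := by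
    rw [symmDiff_def, sup_eq_union, card_union_of_disjoint]
    exact disjoint_sdiff_sdiff
  have h2 := card_sdiff_add_card_inter A B
  have h3 := card_sdiff_add_card_inter B A
  rw [inter_comm] at h3
  rw [Nat.odd_iff, Nat.odd_iff, Nat.odd_iff]
  omega

lemma bd_symmDiff (X Y : Finset (Finset ℕ)) : bd (X ∆ Y) = bd X ∆ bd Y := by
  ext τ
  rw [mem_symmDiff, mem_bd', mem_bd', mem_bd']
  have : ((X ∆ Y).filter fun σ => τ ⊆ σ ∧ τ.card + 1 = σ.card) =
      (X.filter fun σ => τ ⊆ σ ∧ τ.card + 1 = σ.card) ∆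
      (Y.filter fun σ => τ ⊆ σ ∧ τ.card + 1 = σ.card) := by
    ext σ
    simp only [mem_filter, mem_symmDiff]
    tauto
  rw [this, odd_card_symmDiff]
  tauto

lemma bd_empty' : bd ∅ = ∅ := by
  simp [bd]

lemma mem_bd_singleton (σ τ : Finset ℕ) : τ ∈ bd {σ} ↔ τ ⊆ σ ∧ τ.card + 1 = σ.card := by
  rw [mem_bd', filter_singleton]
  split_ifs with h <;> simp [h]

lemma bd_bd_singleton (σ : Finset ℕ) : bd (bd {σ}) = ∅ := by
  rw [eq_empty_iff_forall_notMem]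
  intro ρ hρ
  rw [mem_bd'] at hρ
  have hne := card_pos.1 hρ.pos
  obtain ⟨τ, hτ⟩ := hne
  rw [mem_filter, mem_bd_singleton] at hτ
  obtain ⟨⟨h1, h2⟩, h3, h4⟩ := hτ
  have hρσ := h3.trans h1
  have key : ((bd {σ}).filter fun τ => ρ ⊆ τ ∧ ρ.card + 1 = τ.card) =
      (σ \ ρ).image (fun x => insert x ρ) := by
    ext τ'
    simp only [mem_filter, mem_bd_singleton, mem_image, mem_sdiff]
    constructor
    · rintro ⟨⟨a1, a2⟩, a3, a4⟩
      obtain ⟨x, hx, rfl⟩ := (covBy_iff_card_sdiff_eq_one (s := τ') (t := ρ)).2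
        ⟨a3, by rw [card_sdiff_of_subset a3]; omega⟩ |>.exists_finset_insert
      exact ⟨x, ⟨a1 (mem_insert_self _ _), hx⟩, rfl⟩
    · rintro ⟨x, ⟨b1, b2⟩, rfl⟩
      rw [card_insert_of_notMem b2]
      exact ⟨⟨insert_subset b1 hρσ, by omega⟩, subset_insert _ _, rfl⟩
  rw [key, card_image_of_injOn, card_sdiff_of_subset hρσ, Nat.odd_iff] at hρ
  · omega
  · intro x hx y hy hxy
    simp only [coe_sdiff, Set.mem_sdiff, mem_coe] at hx hy
    have : x ∈ insert y ρ := by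
      have hxy : insert x ρ = insert y ρ := hxy
      rw [← hxy]; exact mem_insert_self _ _
    rcases mem_insert.1 this with h | h
    · exact h
    · exact absurd h hx.2

lemma bd_bd (X : Finset (Finset ℕ)) : bd (bd X) = ∅ := by
  induction X using Finset.induction_on with
  | empty => rw [bd_empty', bd_empty']
  | insert a s ha ih =>
    have : insert a s = {a} ∆ s := by
      ext x
      simp only [mem_insert, mem_symmDiff, mem_singleton]
      constructor
      · rintro (rfl | h)
        · exact Or.inl ⟨rfl, ha⟩
        · exact Or.inr ⟨h, fun e => ha (e ▸ h)⟩
      · tauto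
    rw [this, bd_symmDiff, bd_symmDiff, bd_bd_singleton, ih, symmDiff_self]
    rfl

lemma card_simplices (V : Finset ℕ) (d : ℕ) : (simplices V d).card = V.card.choose (d + 1) := by
  unfold simplices
  rw [← powersetCard_eq_filter, card_powersetCard]

lemma eq_empty_of_all_mem (Z : Finset (Finset ℕ)) (v : ℕ) (hZ : bd Z = ∅)
    (h : ∀ τ ∈ Z, v ∈ τ) : Z = ∅ := by
  rw [eq_empty_iff_forall_notMem]
  intro τ hτ
  have hv := h τ hτ
  have hc := card_erase_add_one hv
  have : τ.erase v ∈ bd Z := by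
    rw [mem_bd']
    have : (Z.filter fun σ => τ.erase v ⊆ σ ∧ (τ.erase v).card + 1 = σ.card) = {τ} := by
      ext σ
      simp only [mem_filter, mem_singleton]
      constructor
      · rintro ⟨a, b, e⟩
        have hs : τ ⊆ σ := by
          rw [← insert_erase hv]
          exact insert_subset (h σ a) b
        exact (eq_of_subset_of_card_le hs (by omega)).symm
      · rintro rfl
        exact ⟨hτ, erase_subset _ _, hc⟩
    rw [this]
    simp
  rw [hZ] at this
  simp at this

lemma card_acyclic_le (n d : ℕ) (hn : d + 1 ≤ n) (T : Finset (Finset ℕ))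
    (hT : T ⊆ simplices (rng n) d) (hA : IsAcyclic T) : T.card ≤ (n - 1).choose d := by
  have key : T.powerset.card ≤ (((rng n).erase 1).powersetCard d).powerset.card := by
    apply card_le_card_of_injOn (fun Y => (bd Y).filter fun τ => 1 ∉ τ)
    · intro Y hY
      simp only [coe_powerset, Set.mem_preimage, Set.mem_powerset_iff, coe_subset] at hY ⊢
      intro τ hτ
      rw [mem_filter, mem_bd'] at hτ
      obtain ⟨σ, hσ⟩ := card_pos.1 hτ.1.pos
      rw [mem_filter] at hσ
      obtain ⟨a, b, e⟩ := hσ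
      have := hT (hY a)
      rw [simplices, mem_filter, mem_powerset] at this
      rw [mem_powersetCard]
      exact ⟨subset_erase.2 ⟨b.trans this.1, hτ.2⟩, by omega⟩
    · intro Y hY Y' hY' he
      simp only [coe_powerset, Set.mem_preimage, Set.mem_powerset_iff, coe_subset] at hY hY'
      have he : (bd Y).filter (fun τ => 1 ∉ τ) = (bd Y').filter (fun τ => 1 ∉ τ) := he
      have hz : bd (Y ∆ Y') = ∅ := by
        apply eq_empty_of_all_mem _ 1 (bd_bd _)
        intro τ hτ
        by_contra hc
        rw [bd_symmDiff, mem_symmDiff] at hτ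
        have := congrArg (fun s => τ ∈ s) he
        simp only [mem_filter, hc, not_false_eq_true, and_true, eq_iff_iff] at this
        tauto
      by_contra hne
      refine hA (Y ∆ Y') ?_ ?_ hz
      · intro x hx
        rw [mem_symmDiff] at hx
        rcases hx with hx | hx
        · exact hY hx.1
        · exact hY' hx.1
      · intro h0
        exact hne (symmDiff_eq_bot.1 h0)
  rw [card_powerset, card_powerset, card_powersetCard, card_erase_of_mem (by simp [rng]; omega)] at key
  have := (Nat.pow_le_pow_iff_right (by norm_num)).1 key
  simpa [rng] using this

lemma fill_subset (Z T : Finset (Finset ℕ)) : fill Z T ⊆ T := by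
  unfold fill
  split_ifs with h
  · exact h.choose_spec.1
  · exact empty_subset _

lemma bd_fill_of_mem {Z T : Finset (Finset ℕ)} {τ : Finset ℕ} (hτ : τ ∈ fill Z T) :
    bd (fill Z T) = Z := by
  unfold fill at hτ ⊢
  split_ifs at hτ ⊢ with h
  · exact h.choose_spec.2
  · simp at hτ

lemma acyclic_zero {T Y : Finset (Finset ℕ)} (hA : IsAcyclic T) (hY : Y ⊆ T) (h : bd Y = ∅) :
    Y = ∅ := by
  by_contra hne
  exact hA Y hY hne h

lemma exists_fill {V : Finset ℕ} {d : ℕ} {T : Finset (Finset ℕ)} (hT : IsHypertreeOn V d T)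
    {g : Finset ℕ} (hg : g ∈ simplices V d) (hgT : g ∉ T) : ∃ F ⊆ T, bd F = bd {g} := by
  obtain ⟨h1, h2, h3⟩ := hT
  have hna : ¬ IsAcyclic (insert g T) := by
    intro ha
    have := h3 _ (subset_insert g T) (insert_subset hg h1) ha
    exact hgT (this ▸ mem_insert_self _ _)
  unfold IsAcyclic at hna
  push Not at hna
  obtain ⟨Y, hY, hne, hb⟩ := hna
  have hb : bd Y = ∅ := hb
  have hgY : g ∈ Y := by
    by_contra hgY
    have : Y ⊆ T := (subset_insert_iff_of_notMem hgY).1 hY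
    exact h2 Y this hne.ne_empty hb
  refine ⟨Y ∆ {g}, ?_, ?_⟩
  · intro x hx
    rw [mem_symmDiff, mem_singleton] at hx
    rcases hx with ⟨a, b⟩ | ⟨rfl, b⟩
    · exact (mem_insert.1 (hY a)).resolve_left b
    · exact absurd hgY b
  · rw [bd_symmDiff, hb]
    exact bot_symmDiff _

lemma exchange {V : Finset ℕ} {d : ℕ} {T F : Finset (Finset ℕ)} (hT : IsHypertreeOn V d T)
    {σ τ : Finset ℕ} (hσ : σ ∈ simplices V d) (hF : F ⊆ T) (hb : bd F = bd {σ}) (hτ : τ ∈ F) :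
    IsHypertreeOn V d ((T ∆ {τ}) ∆ {σ}) := by
  have hT' := hT
  obtain ⟨h1, h2, h3⟩ := hT
  have hτT := hF hτ
  have hbz : bd (F ∆ {σ}) = ∅ := by
    rw [bd_symmDiff, hb, symmDiff_self]; rfl
  by_cases hσT : σ ∈ T
  · have h0 : F ∆ {σ} = ∅ := by
      refine acyclic_zero h2 ?_ hbz
      intro x hx
      rw [mem_symmDiff, mem_singleton] at hx
      rcases hx with ⟨a, b⟩ | ⟨rfl, b⟩
      · exact hF a
      · exact hσT
    have h0 : F = {σ} := symmDiff_eq_bot.1 h0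
    rw [h0, mem_singleton] at hτ
    subst hτ
    rw [symmDiff_symmDiff_cancel_right]
    exact hT'
  have hne : τ ≠ σ := fun e => hσT (e ▸ hτT)
  have hmem : ∀ x, x ∈ (T ∆ {τ}) ∆ {σ} ↔ (x ∈ T ∧ x ≠ τ) ∨ x = σ := by
    intro x
    simp only [mem_symmDiff, mem_singleton]
    constructor
    · rintro (⟨⟨a, b⟩ | ⟨rfl, b⟩, e⟩ | ⟨rfl, b⟩)
      · exact Or.inl ⟨a, b⟩
      · exact absurd hτT b
      · exact Or.inr rfl
    · rintro (⟨a, b⟩ | rfl)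
      · exact Or.inl ⟨Or.inl ⟨a, b⟩, fun e => hσT (e ▸ a)⟩
      · refine Or.inr ⟨rfl, ?_⟩
        rintro (⟨a, b⟩ | ⟨a, b⟩)
        · exact hσT a
        · exact hne a.symm
  refine ⟨?_, ?_, ?_⟩
  · intro x hx
    rcases (hmem x).1 hx with h | rfl
    · exact h1 h.1
    · exact hσ
  · intro Y hY hYne hYb
    by_cases hσY : σ ∈ Y
    · have h0 : Y ∆ (F ∆ {σ}) = ∅ := by
        refine acyclic_zero h2 ?_ ?_
        · intro x hx
          have hxσ : x ≠ σ := by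
            rintro rfl
            simp only [mem_symmDiff, mem_singleton] at hx
            have : x ∉ F := fun h => hσT (hF h)
            tauto
          simp only [mem_symmDiff, mem_singleton] at hx
          rcases hx with ⟨a, b⟩ | ⟨a, b⟩
          · rcases (hmem x).1 (hY a) with h | h
            · exact h.1
            · exact absurd h hxσ
          · rcases a with a | a
            · exact hF a.1
            · exact absurd a.1 hxσ
        · rw [bd_symmDiff, hbz, hYb, symmDiff_self]; rfl
      have h0 : Y = F ∆ {σ} := symmDiff_eq_bot.1 h0
      have : τ ∈ Y := by
        rw [h0, mem_symmDiff, mem_singleton]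
        exact Or.inl ⟨hτ, hne⟩
      rcases (hmem τ).1 (hY this) with h | h
      · exact h.2 rfl
      · exact hne h
    · refine h2 Y ?_ hYne hYb
      intro x hx
      rcases (hmem x).1 (hY hx) with h | rfl
      · exact h.1
      · exact absurd hx hσY
  · intro G hG hGs hGa
    refine Subset.antisymm ?_ hG
    intro g hg
    by_contra hgn
    have hGσ : σ ∈ G := hG ((hmem σ).2 (Or.inr rfl))
    have hGT : ∀ x ∈ T, x ≠ τ → x ∈ G := fun x hx hxt => hG ((hmem x).2 (Or.inl ⟨hx, hxt⟩))
    have hgσ : g ≠ σ := fun e => hgn ((hmem g).2 (Or.inr e))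
    by_cases hgτ : g = τ
    · subst hgτ
      have h0 : F ∆ {σ} = ∅ := by
        refine acyclic_zero hGa ?_ hbz
        intro x hx
        rw [mem_symmDiff, mem_singleton] at hx
        rcases hx with ⟨a, b⟩ | ⟨rfl, b⟩
        · by_cases hx : x = g
          · exact hx ▸ hg
          · exact hGT x (hF a) hx
        · exact hGσ
      have h0 : F = {σ} := symmDiff_eq_bot.1 h0
      rw [h0, mem_singleton] at hτ
      exact hne hτ
    · have hgT : g ∉ T := fun h => hgn ((hmem g).2 (Or.inl ⟨h, hgτ⟩))
      obtain ⟨H, hH, hHb⟩ := exists_fill hT' (hGs hg) hgT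
      have hHz : bd (H ∆ {g}) = ∅ := by
        rw [bd_symmDiff, hHb, symmDiff_self]; rfl
      have hgH : g ∉ H := fun h => hgT (hH h)
      have hgF : g ∉ F := fun h => hgT (hF h)
      by_cases hτH : τ ∈ H
      · have h0 : (H ∆ {g}) ∆ (F ∆ {σ}) = ∅ := by
          refine acyclic_zero hGa ?_ ?_
          · intro x hx
            by_cases hxτ : x = τ
            · subst hxτ
              exfalso
              simp only [mem_symmDiff, mem_singleton] at hx
              have := Ne.symm hgτ
              tauto
            by_cases hxg : x = g
            · exact hxg ▸ hg
            by_cases hxσ : x = σ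
            · exact hxσ ▸ hGσ
            apply hGT x _ hxτ
            simp only [mem_symmDiff, mem_singleton] at hx
            have a1 := @hH x
            have a2 := @hF x
            tauto
          · rw [bd_symmDiff, hHz, hbz, symmDiff_self]; rfl
        have : g ∈ (H ∆ {g}) ∆ (F ∆ {σ}) := by
          simp only [mem_symmDiff, mem_singleton]
          tauto
        rw [h0] at this
        simp at this
      · have h0 : H ∆ {g} = ∅ := by
          refine acyclic_zero hGa ?_ hHz
          intro x hx
          rw [mem_symmDiff, mem_singleton] at hx
          rcases hx with ⟨a, b⟩ | ⟨rfl, b⟩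
          · exact hGT x (hH a) (fun e => hτH (e ▸ a))
          · exact hg
        have : g ∈ H ∆ {g} := by
          simp only [mem_symmDiff, mem_singleton]
          tauto
        rw [h0] at this
        simp at this

lemma mem_cut_of_mem_fill {n d : ℕ} {T : Finset (Finset ℕ)} (hT : IsHypertreeOn (rng n) d T)
    {σ τ : Finset ℕ} (hσ : σ ∈ simplices (rng n) d) (hτ : τ ∈ fill (bd {σ}) T) :
    σ ∈ cut n d τ T := by
  classical
  unfold cut
  rw [mem_filter]
  exact ⟨hσ, exchange hT hσ (fill_subset _ _) (bd_fill_of_mem hτ) hτ⟩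

/-- In any `d`-hypertree `T` on `[n]` with average filling-volume `μ(T) ≥ c·C(n-1,d)`,
there are `τ ∈ T` and `σ ∈ Cut(τ,T)` with
`|Cut(τ,T)|·|Fill(σ,T)| ≥ (c³/8)·C(n,d+1)·C(n-1,d)`. -/
theorem exists_large_cut_and_fill (d n : ℕ) (hd : 1 ≤ d) (hn : d + 1 ≤ n)
    (c : ℝ) (hc : 0 < c) (T : Finset (Finset ℕ)) (hT : IsHypertreeOn (rng n) d T)
    (hmu : c * ((n - 1).choose d : ℝ) ≤ fillVolAvg n d T) :
    ∃ τ ∈ T, ∃ σ ∈ cut n d τ T,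
      c ^ 3 / 8 * (n.choose (d + 1) : ℝ) * ((n - 1).choose d : ℝ) ≤
        ((cut n d τ T).card : ℝ) * ((fill (bd {σ}) T).card : ℝ) := by
  classical
  have hTm : (T.card : ℝ) ≤ ((n - 1).choose d : ℝ) := by
    exact_mod_cast card_acyclic_le n d hn T hT.1 hT.2.1
  have hS : ((simplices (rng n) d).card : ℝ) = (n.choose (d + 1) : ℝ) := by
    rw [card_simplices]; simp [rng]
  have hN : (0 : ℝ) < (n.choose (d + 1) : ℝ) := by
    exact_mod_cast Nat.choose_pos hn
  have hm : (0 : ℝ) < ((n - 1).choose d : ℝ) := by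
    exact_mod_cast Nat.choose_pos (by omega)
  unfold fillVolAvg at hmu
  rw [le_div_iff₀ hN] at hmu
  generalize (n.choose (d + 1) : ℝ) = N at *
  generalize ((n - 1).choose d : ℝ) = m at *
  have hc1 : c ≤ 1 := by
    have : ∑ σ ∈ simplices (rng n) d, ((fill (bd {σ}) T).card : ℝ) ≤
        ∑ σ ∈ simplices (rng n) d, m := by
      apply sum_le_sum
      intro σ _
      refine le_trans ?_ hTm
      exact_mod_cast card_le_card (fill_subset _ _)
    rw [sum_const, nsmul_eq_mul, hS] at this
    have hp : 0 < m * N := by positivity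
    nlinarith
  by_contra hcon
  push Not at hcon
  let small : Finset (Finset ℕ) := T.filter fun τ => ((cut n d τ T).card : ℝ) ≤ 2 / 5 * c * N
  have hpt : ∀ σ ∈ simplices (rng n) d, ((fill (bd {σ}) T).card : ℝ) ≤
      2 / 5 * c * m + ((small.filter fun τ => τ ∈ fill (bd {σ}) T).card : ℝ) := by
    intro σ hσ
    by_cases hs : ((fill (bd {σ}) T).card : ℝ) ≤ 2 / 5 * c * m
    · have : (0 : ℝ) ≤ ((small.filter fun τ => τ ∈ fill (bd {σ}) T).card : ℝ) := by positivity
      linarith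
    · have hsub : fill (bd {σ}) T ⊆ small.filter fun τ => τ ∈ fill (bd {σ}) T := by
        intro τ hτ
        have hτT := fill_subset _ _ hτ
        refine mem_filter.2 ⟨mem_filter.2 ⟨hτT, ?_⟩, hτ⟩
        by_contra hb
        push Not at hs hb
        have h1 := hcon τ hτT σ (mem_cut_of_mem_fill hT hσ hτ)
        have h2 : (2 / 5 * c * N) * (2 / 5 * c * m) ≤
            ((cut n d τ T).card : ℝ) * ((fill (bd {σ}) T).card : ℝ) := by
          apply mul_le_mul hb.le hs.le <;> positivity
        have hp : 0 < c ^ 2 * (N * m) := by positivity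
        nlinarith
      have : ((fill (bd {σ}) T).card : ℝ) ≤
          ((small.filter fun τ => τ ∈ fill (bd {σ}) T).card : ℝ) := by
        exact_mod_cast card_le_card hsub
      have : 0 < 2 / 5 * c * m := by positivity
      linarith
  have hsum := sum_le_sum hpt
  rw [sum_add_distrib, sum_const, nsmul_eq_mul, hS] at hsum
  have hdc : ∑ σ ∈ simplices (rng n) d, (small.filter fun τ => τ ∈ fill (bd {σ}) T).card =
      ∑ τ ∈ small, ((simplices (rng n) d).filter fun σ => τ ∈ fill (bd {σ}) T).card :=
    sum_card_bipartiteAbove_eq_sum_card_bipartiteBelow (fun σ τ => τ ∈ fill (bd {σ}) T)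
  have hdc' : ∑ σ ∈ simplices (rng n) d,
      ((small.filter fun τ => τ ∈ fill (bd {σ}) T).card : ℝ) =
      ∑ τ ∈ small, (((simplices (rng n) d).filter fun σ => τ ∈ fill (bd {σ}) T).card : ℝ) := by
    exact_mod_cast hdc
  have hb : ∑ τ ∈ small, (((simplices (rng n) d).filter fun σ => τ ∈ fill (bd {σ}) T).card : ℝ)
      ≤ ∑ τ ∈ small, 2 / 5 * c * N := by
    apply sum_le_sum
    intro τ hτ
    refine le_trans ?_ (mem_filter.1 hτ).2
    have : ((simplices (rng n) d).filter fun σ => τ ∈ fill (bd {σ}) T) ⊆ cut n d τ T := by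
      intro σ hσ
      rw [mem_filter] at hσ
      exact mem_cut_of_mem_fill hT hσ.1 hσ.2
    exact_mod_cast card_le_card this
  rw [sum_const, nsmul_eq_mul] at hb
  have hsm : (small.card : ℝ) ≤ m := by
    refine le_trans ?_ hTm
    exact_mod_cast card_le_card (filter_subset _ _)
  have h5 : (small.card : ℝ) * (2 / 5 * c * N) ≤ m * (2 / 5 * c * N) := by
    apply mul_le_mul_of_nonneg_right hsm; positivity
  have hp : 0 < c * m * N := by positivity
  nlinarith
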